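/- arXiv:2110.05051 — 2 statements merged into one kernel-verified Lean document; each statement's English description precedes it below -/
import Mathlib

section
/- Let ν ≥ 0, α > -1, c > 0 and k ∈ ℕ. Then ∫_0^∞ x^{k+α} e^{-cx} J_ν(x) dx = Γ(k+α+ν+1) / ( (c²+1)^{(k+α+1)/2} · Γ(ν+1) ) · ( (√(c²+1)+c)/(√(c²+1)−c) )^{−ν/2} · ₂F₁( −k−α, k+α+1; 1+ν; (√(c²+1)−c)/(2√(c²+1)) ), where the hypergeometric argument lies in (0, 1/2) so the defining series converges absolutely. -/
open MeasureTheory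

/-- Bessel function of the first kind of order `ν`, defined via its power series. -/
noncomputable def besselJ (ν x : ℝ) : ℝ :=
  ∑' m : ℕ, (-1 : ℝ) ^ m / (m.factorial * Real.Gamma ((m : ℝ) + ν + 1)) *
    (x / 2) ^ (2 * (m : ℝ) + ν)

/-- Ascending factorial (Pochhammer symbol) `(a)_n = a (a+1) ⋯ (a+n-1)`. -/
noncomputable def ascFactorial (a : ℝ) (n : ℕ) : ℝ :=
  ∏ i ∈ Finset.range n, (a + i)

/-- Gauss hypergeometric function `₂F₁(a, b; γ; z)` defined by its power series. -/
noncomputable def hyper2F1 (a b γ z : ℝ) : ℝ :=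
  ∑' n : ℕ, ascFactorial a n * ascFactorial b n / (ascFactorial γ n * n.factorial) * z ^ n

/-!
Put `μ = k + α` and `s = μ + ν + 1`. For `c > 1` the Bessel series may be integrated termwise
against `x ^ μ * exp (-c x)`, giving `Γ(s) / (2 ^ ν Γ(ν + 1)) * c ^ (-s)` times
`₂F₁(s / 2, (s + 1) / 2; 1 + ν; -1 / c²)`. With `r = √(c² + 1)` and `w = (r - c) / (r + c)` one has
`1 / c² = 4 w / (1 - w)²`, so a quadratic transformation turns this into `₂F₁(μ + 1, s; 1 + ν; -w)`,
and as `w = z / (1 - z)` for `z = (r - c) / (2 r)`, the Pfaff transformation leads to the closed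
form. In both transformations one expands the powers of `1 - z` by the binomial series and sums the
resulting coefficients by the Chu–Vandermonde identity.

All `c > 0` are reached by analytic continuation. The Laplace transform converges there because
the Bessel–Clifford function `C_ν(-x² / 4) = (x / 2) ^ (-ν) J_ν(x)` is bounded for `ν ≥ -1 / 2`, by
monotonicity of an energy, and a contiguity relation reduces smaller `ν` to this case.
-/

open Finset.HasAntidiagonal (antidiagonal mem_antidiagonal)

theorem ascFactorial_zero (a : ℝ) : ascFactorial a 0 = 1 :=
  Finset.prod_range_zero _

theorem ascFactorial_succ (a : ℝ) (n : ℕ) : ascFactorial a (n + 1) = ascFactorial a n * (a + n) :=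
  Finset.prod_range_succ _ n

theorem ascFactorial_add (a : ℝ) (n j : ℕ) :
    ascFactorial a (n + j) = ascFactorial a n * ascFactorial (a + n) j := by
  simp only [ascFactorial, Finset.prod_range_add, Nat.cast_add, add_assoc]

theorem ascFactorial_ne_zero {a : ℝ} (ha : ∀ k : ℕ, a ≠ -k) (n : ℕ) : ascFactorial a n ≠ 0 :=
  Finset.prod_ne_zero_iff.2 fun i _ h => ha i (eq_neg_of_add_eq_zero_left h)

theorem ascFactorial_nonneg {a : ℝ} (ha : 0 ≤ a) (n : ℕ) : 0 ≤ ascFactorial a n :=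
  Finset.prod_nonneg fun _ _ => by positivity

theorem abs_ascFactorial_le (a : ℝ) (n : ℕ) : |ascFactorial a n| ≤ ascFactorial |a| n := by
  rw [ascFactorial, Finset.abs_prod]
  refine Finset.prod_le_prod (fun _ _ => abs_nonneg _) fun i _ => (abs_add_le a i).trans_eq ?_
  rw [Nat.abs_cast]

theorem ascFactorial_two_mul (a : ℝ) (n : ℕ) :
    ascFactorial a (2 * n) = 4 ^ n * (ascFactorial (a / 2) n * ascFactorial ((a + 1) / 2) n) := by
  induction n with
  | zero => simp [ascFactorial_zero]
  | succ n ih =>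
    rw [mul_add_one, ascFactorial_succ, ascFactorial_succ, ih]
    simp only [ascFactorial_succ, pow_succ]
    push_cast
    ring

theorem ascFactorial_neg_sub (a : ℝ) (n : ℕ) :
    ascFactorial (-a - n) n = (-1) ^ n * ascFactorial (a + 1) n := by
  have hsign : (-1 : ℝ) ^ n = ∏ _i ∈ Finset.range n, (-1 : ℝ) := by simp
  rw [ascFactorial, ← Finset.prod_range_reflect, ascFactorial, hsign, ← Finset.prod_mul_distrib]
  refine Finset.prod_congr rfl fun i hi => ?_
  rw [Nat.sub_sub, Nat.cast_sub (by have := Finset.mem_range.1 hi; omega)]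
  push_cast
  ring

theorem ascFactorial_eq_ascPochhammer_eval (a : ℝ) (n : ℕ) :
    ascFactorial a n = (ascPochhammer ℝ n).eval a := by
  induction n with
  | zero => simp [ascFactorial_zero]
  | succ n ih => rw [ascFactorial_succ, ih, ascPochhammer_succ_eval]

theorem ascFactorial_div_factorial (a : ℝ) (n : ℕ) :
    ascFactorial a n / n.factorial = Ring.choose (a + n - 1) n := by
  rw [← Ring.multichoose_eq, div_eq_iff (by positivity), mul_comm, ← nsmul_eq_mul,
    Ring.factorial_nsmul_multichoose_eq_ascPochhammer, Polynomial.ascPochhammer_smeval_eq_eval,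
    ascFactorial_eq_ascPochhammer_eval]

theorem neg_one_pow_mul_ascFactorial_div_factorial (a : ℝ) (n : ℕ) :
    (-1) ^ n * (ascFactorial a n / n.factorial) = Ring.choose (-a) n := by
  rw [Ring.choose_neg, ascFactorial_div_factorial, Units.smul_def, zsmul_eq_mul]
  simp [Int.negOnePow]

theorem Gamma_add_natCast {s : ℝ} (hs : ∀ k : ℕ, s ≠ -k) (n : ℕ) :
    Real.Gamma (s + n) = ascFactorial s n * Real.Gamma s := by
  induction n with
  | zero => simp [ascFactorial_zero]
  | succ n ih =>
    have hsn : s + n ≠ 0 := fun h => hs n (eq_neg_of_add_eq_zero_left h)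
    rw [Nat.cast_succ, ← add_assoc, Real.Gamma_add_one hsn, ih, ascFactorial_succ]
    ring

/-- The Chu–Vandermonde identity `₂F₁(-N, b; c; 1) = (c - b)_N / (c)_N`, divided by `N!`. -/
theorem sum_antidiagonal_neg_one_pow_mul_ascFactorial (b : ℝ) {c : ℝ} (hc : ∀ k : ℕ, c ≠ -k)
    (N : ℕ) :
    ∑ p ∈ antidiagonal N, (-1) ^ p.1 * ascFactorial b p.1 /
        (ascFactorial c p.1 * p.1.factorial * p.2.factorial) =
      ascFactorial (c - b) N / (ascFactorial c N * N.factorial) := by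
  have hvandermonde := Ring.add_choose_eq N (Commute.all (-b) (c + N - 1))
  rw [show -b + (c + N - 1) = c - b + N - 1 by ring, ← ascFactorial_div_factorial] at hvandermonde
  rw [mul_comm (ascFactorial c N), ← div_div, hvandermonde, Finset.sum_div]
  refine Finset.sum_congr rfl fun p hp => ?_
  obtain rfl := mem_antidiagonal.1 hp
  have hchoose : Ring.choose (c + ↑(p.1 + p.2) - 1) p.2 =
      ascFactorial (c + p.1) p.2 / p.2.factorial := by
    rw [ascFactorial_div_factorial, Nat.cast_add, ← add_assoc]
  have hc₁ := ascFactorial_ne_zero hc p.1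
  have hc₂ := ascFactorial_ne_zero hc (p.1 + p.2)
  rw [hchoose, ← neg_one_pow_mul_ascFactorial_div_factorial]
  rw [ascFactorial_add] at hc₂ ⊢
  have hc₃ := right_ne_zero_of_mul hc₂
  field_simp

theorem hasSum_one_sub_rpow_neg (b : ℝ) {z : ℝ} (hz : |z| < 1) :
    HasSum (fun j : ℕ => ascFactorial b j / j.factorial * z ^ j) ((1 - z) ^ (-b)) := by
  have h := (Real.one_div_one_sub_rpow_hasFPowerSeriesOnBall_zero b).hasSum
    (y := z) (by simpa [enorm_eq_nnnorm, ← NNReal.coe_lt_coe] using hz)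
  rw [zero_add, one_div, ← Real.rpow_neg (by linarith [(abs_lt.1 hz).2])] at h
  exact h.congr_fun fun j => by
    rw [FormalMultilinearSeries.ofScalars_apply_eq, ascFactorial_div_factorial, smul_eq_mul]

theorem tsum_prod_eq_tsum_sum_antidiagonal {A M : Type*} [AddCommMonoid A]
    [Finset.HasAntidiagonal A] [AddCommGroup M] [UniformSpace M] [IsUniformAddGroup M]
    [CompleteSpace M] [T0Space M] {f : A × A → M} (hf : Summable f) :
    ∑' p, f p = ∑' n, ∑ p ∈ antidiagonal n, f p := by
  rw [← Finset.HasAntidiagonal.sigmaAntidiagonalEquivProd.tsum_eq f]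
  refine (Finset.HasAntidiagonal.sigmaAntidiagonalEquivProd.summable_iff.2 hf).tsum_sigma.trans ?_
  exact tsum_congr fun n => (tsum_fintype _).trans (Finset.sum_coe_sort _ f)

theorem ordinaryHypergeometricSeries_apply_eq_ascFactorial (a b γ z : ℝ) (n : ℕ) :
    ordinaryHypergeometricSeries ℝ a b γ n (fun _ => z) =
      ascFactorial a n * ascFactorial b n / (ascFactorial γ n * n.factorial) * z ^ n := by
  simp only [ordinaryHypergeometricSeries_apply_eq, ascFactorial_eq_ascPochhammer_eval, smul_eq_mul]
  rw [div_eq_mul_inv, mul_inv]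
  ring

theorem hyper2F1_eq_ordinaryHypergeometricSeries_sum (a b γ z : ℝ) :
    hyper2F1 a b γ z = (ordinaryHypergeometricSeries ℝ a b γ).sum z :=
  tsum_congr fun n => (ordinaryHypergeometricSeries_apply_eq_ascFactorial a b γ z n).symm

theorem one_le_radius_ordinaryHypergeometricSeries (a b γ : ℝ) :
    1 ≤ (ordinaryHypergeometricSeries ℝ a b γ).radius := by
  by_cases ha : ∃ k : ℕ, a = -k
  · obtain ⟨k, rfl⟩ := ha
    exact le_top.trans_eq (ordinaryHypergeometric_radius_top_of_neg_nat₁ ℝ b γ).symm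
  by_cases hb : ∃ k : ℕ, b = -k
  · obtain ⟨k, rfl⟩ := hb
    exact le_top.trans_eq (ordinaryHypergeometric_radius_top_of_neg_nat₂ ℝ a γ).symm
  by_cases hγ : ∃ k : ℕ, γ = -k
  · obtain ⟨k, rfl⟩ := hγ
    exact le_top.trans_eq (ordinaryHypergeometric_radius_top_of_neg_nat₃ ℝ a b).symm
  · push Not at ha hb hγ
    refine (ordinaryHypergeometricSeries_radius_eq_one ℝ a b γ fun k => ⟨?_, ?_, ?_⟩).ge
    · exact fun h => ha k (by linarith)
    · exact fun h => hb k (by linarith)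
    · exact fun h => hγ k (by linarith)

theorem mem_eball_radius_ordinaryHypergeometricSeries (a b γ : ℝ) {z : ℝ} (hz : |z| < 1) :
    z ∈ Metric.eball 0 (ordinaryHypergeometricSeries ℝ a b γ).radius := by
  refine Metric.eball_subset_eball (one_le_radius_ordinaryHypergeometricSeries a b γ) ?_
  simpa [enorm_eq_nnnorm, ← NNReal.coe_lt_coe] using hz

theorem summable_norm_hyper2F1 (a b γ : ℝ) {z : ℝ} (hz : |z| < 1) :
    Summable fun n : ℕ =>
      ‖ascFactorial a n * ascFactorial b n / (ascFactorial γ n * n.factorial) * z ^ n‖ := by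
  simpa only [ordinaryHypergeometricSeries_apply_eq_ascFactorial] using
    (ordinaryHypergeometricSeries ℝ a b γ).summable_norm_apply
      (mem_eball_radius_ordinaryHypergeometricSeries a b γ hz)

theorem analyticOnNhd_hyper2F1 (a b γ : ℝ) :
    AnalyticOnNhd ℝ (hyper2F1 a b γ) (Metric.ball 0 1) := by
  rw [funext (hyper2F1_eq_ordinaryHypergeometricSeries_sum a b γ)]
  have hradius := zero_lt_one.trans_le (one_le_radius_ordinaryHypergeometricSeries a b γ)
  exact ((ordinaryHypergeometricSeries ℝ a b γ).hasFPowerSeriesOnBall hradius).analyticOnNhd.mono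
    fun z hz => mem_eball_radius_ordinaryHypergeometricSeries a b γ (mem_ball_zero_iff.1 hz)

theorem hasSum_ascFactorial_add_mul_pow (A b : ℝ) {z : ℝ} (hz : |z| < 1) (k n : ℕ) :
    HasSum (fun j : ℕ => A * ascFactorial b (k * n + j) / j.factorial * z ^ (n + j))
      ((1 - z) ^ (-b) * (A * ascFactorial b (k * n) * (z / (1 - z) ^ k) ^ n)) := by
  have hz1 : 0 < 1 - z := by linarith [(abs_lt.1 hz).2]
  have hrpow : (1 - z) ^ (-(b + (k * n : ℕ))) = (1 - z) ^ (-b) / ((1 - z) ^ k) ^ n := by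
    rw [neg_add, Real.rpow_add hz1, Real.rpow_neg hz1.le (k * n : ℕ), Real.rpow_natCast, pow_mul,
      div_eq_mul_inv]
  have hvalue : (1 - z) ^ (-b) * (A * ascFactorial b (k * n) * (z / (1 - z) ^ k) ^ n) =
      A * ascFactorial b (k * n) * z ^ n * (1 - z) ^ (-(b + (k * n : ℕ))) := by
    rw [hrpow, div_pow]
    ring
  rw [hvalue]
  refine ((hasSum_one_sub_rpow_neg (b + (k * n : ℕ)) hz).mul_left _).congr_fun fun j => ?_
  rw [ascFactorial_add, pow_add]
  ring

/-- Expand each `(1 - z) ^ (-(b + k n))` by the binomial series and collect powers of `z`. -/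
theorem one_sub_rpow_neg_mul_tsum (A : ℕ → ℝ) (b : ℝ) (k : ℕ) {z : ℝ} (hz : |z| < 1)
    (hA : Summable fun n => |A n| * ascFactorial |b| (k * n) * (|z| / (1 - |z|) ^ k) ^ n) :
    (1 - z) ^ (-b) * ∑' n, A n * ascFactorial b (k * n) * (z / (1 - z) ^ k) ^ n =
      ∑' N, (∑ p ∈ antidiagonal N, A p.1 * ascFactorial b (k * p.1 + p.2) / p.2.factorial) *
        z ^ N := by
  let f : ℕ × ℕ → ℝ := fun p =>
    A p.1 * ascFactorial b (k * p.1 + p.2) / p.2.factorial * z ^ (p.1 + p.2)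
  let g : ℕ × ℕ → ℝ := fun p =>
    |A p.1| * ascFactorial |b| (k * p.1 + p.2) / p.2.factorial * |z| ^ (p.1 + p.2)
  have hfibre_f (n : ℕ) := hasSum_ascFactorial_add_mul_pow (A n) b hz k n
  have hfibre_g (n : ℕ) :=
    hasSum_ascFactorial_add_mul_pow |A n| |b| ((abs_abs z).trans_lt hz) k n
  have hg : Summable g := by
    refine (summable_prod_of_nonneg fun p => ?_).2 ⟨fun n => (hfibre_g n).summable, ?_⟩
    · have := ascFactorial_nonneg (abs_nonneg b) (k * p.1 + p.2)
      positivity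
    · exact (hA.mul_left ((1 - |z|) ^ (-|b|))).congr fun n => (hfibre_g n).tsum_eq.symm
  have hf : Summable f := hg.of_norm_bounded fun p => by
    simp only [f, g, Real.norm_eq_abs, abs_mul, abs_div, abs_pow, Nat.abs_cast]
    gcongr
    exact abs_ascFactorial_le b _
  calc (1 - z) ^ (-b) * ∑' n, A n * ascFactorial b (k * n) * (z / (1 - z) ^ k) ^ n
      = ∑' n, ∑' j, f (n, j) := by
        rw [← tsum_mul_left]
        exact tsum_congr fun n => (hfibre_f n).tsum_eq.symm
    _ = ∑' N, ∑ p ∈ antidiagonal N, f p := by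
        rw [← hf.tsum_prod, tsum_prod_eq_tsum_sum_antidiagonal hf]
    _ = _ := tsum_congr fun N => by
        rw [Finset.sum_mul]
        exact Finset.sum_congr rfl fun p hp => by rw [← mem_antidiagonal.1 hp]

theorem sum_antidiagonal_pfaff_coeff (a b : ℝ) {c : ℝ} (hc : ∀ k : ℕ, c ≠ -k) (N : ℕ) :
    ∑ p ∈ antidiagonal N, (-1) ^ p.1 * ascFactorial (c - a) p.1 /
        (ascFactorial c p.1 * p.1.factorial) * ascFactorial b (p.1 + p.2) / p.2.factorial =
      ascFactorial a N * ascFactorial b N / (ascFactorial c N * N.factorial) := by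
  have hvandermonde := sum_antidiagonal_neg_one_pow_mul_ascFactorial (c - a) hc N
  rw [sub_sub_cancel] at hvandermonde
  rw [mul_comm (ascFactorial a N), mul_div_assoc, ← hvandermonde, Finset.mul_sum]
  refine Finset.sum_congr rfl fun p hp => ?_
  rw [mem_antidiagonal.1 hp]
  ring

theorem sum_antidiagonal_quadratic_coeff (a : ℝ) {γ : ℝ} (hγ : ∀ k : ℕ, γ ≠ -k) (N : ℕ) :
    ∑ p ∈ antidiagonal N, (-1) ^ p.1 / (ascFactorial γ p.1 * p.1.factorial) *
        ascFactorial a (2 * p.1 + p.2) / p.2.factorial =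
      (-1) ^ N * (ascFactorial (a - γ + 1) N * ascFactorial a N /
        (ascFactorial γ N * N.factorial)) := by
  have hvandermonde := sum_antidiagonal_neg_one_pow_mul_ascFactorial (a + N) hγ N
  rw [show γ - (a + N) = -(a - γ) - N by ring, ascFactorial_neg_sub] at hvandermonde
  calc _ = ascFactorial a N * ((-1) ^ N * ascFactorial (a - γ + 1) N /
        (ascFactorial γ N * N.factorial)) := ?_
    _ = _ := by ring
  rw [← hvandermonde, Finset.mul_sum]
  refine Finset.sum_congr rfl fun p hp => ?_
  rw [show 2 * p.1 + p.2 = N + p.1 by have := mem_antidiagonal.1 hp; omega, ascFactorial_add]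
  ring

theorem one_sub_rpow_neg_mul_hyper2F1_pfaff (a b : ℝ) {c z : ℝ} (hc : ∀ k : ℕ, c ≠ -k)
    (hz : |z| < 1 / 2) :
    (1 - z) ^ (-b) * hyper2F1 b (c - a) c (-(z / (1 - z))) = hyper2F1 a b c z := by
  have hz1 : 0 < 1 - |z| := by linarith
  have hw : |(|z| / (1 - |z|))| < 1 := by
    rw [abs_of_nonneg (by positivity), div_lt_one hz1]
    linarith
  let A : ℕ → ℝ := fun n => (-1) ^ n * ascFactorial (c - a) n / (ascFactorial c n * n.factorial)
  have hA : Summable fun n => |A n| * ascFactorial |b| (1 * n) * (|z| / (1 - |z|) ^ 1) ^ n := by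
    refine (summable_norm_hyper2F1 |b| (c - a) c hw).congr fun n => ?_
    simp only [A, Real.norm_eq_abs, abs_mul, abs_div, abs_pow, abs_neg, abs_one, one_pow, abs_abs,
      abs_of_nonneg (ascFactorial_nonneg (abs_nonneg b) n), abs_of_pos hz1, one_mul, pow_one]
    ring
  calc (1 - z) ^ (-b) * hyper2F1 b (c - a) c (-(z / (1 - z)))
      = (1 - z) ^ (-b) * ∑' n, A n * ascFactorial b (1 * n) * (z / (1 - z) ^ 1) ^ n := by
        congr 1
        refine tsum_congr fun n => ?_
        rw [neg_pow, one_mul, pow_one]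
        ring
    _ = _ := one_sub_rpow_neg_mul_tsum A b 1 (by linarith) hA
    _ = hyper2F1 a b c z := tsum_congr fun N => by
        simp only [A, one_mul, sum_antidiagonal_pfaff_coeff a b hc N]

theorem one_sub_rpow_neg_mul_hyper2F1_quadratic (a : ℝ) {γ z : ℝ} (hγ : ∀ k : ℕ, γ ≠ -k)
    (hz : |z| < 1) (hz4 : 4 * |z| < (1 - |z|) ^ 2) :
    (1 - z) ^ (-a) * hyper2F1 (a / 2) ((a + 1) / 2) γ (-(4 * z / (1 - z) ^ 2)) =
      hyper2F1 (a - γ + 1) a γ (-z) := by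
  have hz1 : 0 < 1 - |z| := by linarith
  have hw : |4 * |z| / (1 - |z|) ^ 2| < 1 := by
    rwa [abs_of_nonneg (by positivity), div_lt_one (by positivity)]
  let A : ℕ → ℝ := fun n => (-1) ^ n / (ascFactorial γ n * n.factorial)
  have hA : Summable fun n => |A n| * ascFactorial |a| (2 * n) * (|z| / (1 - |z|) ^ 2) ^ n := by
    refine (summable_norm_hyper2F1 (|a| / 2) ((|a| + 1) / 2) γ hw).congr fun n => ?_
    have h₁ := ascFactorial_nonneg (show 0 ≤ |a| / 2 by positivity) n
    have h₂ := ascFactorial_nonneg (show 0 ≤ (|a| + 1) / 2 by positivity) n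
    simp only [A, Real.norm_eq_abs, abs_mul, abs_div, abs_pow, abs_neg, abs_one, one_pow, abs_abs,
      abs_of_nonneg h₁, abs_of_nonneg h₂, abs_of_pos hz1, ascFactorial_two_mul, Nat.abs_ofNat]
    ring
  calc (1 - z) ^ (-a) * hyper2F1 (a / 2) ((a + 1) / 2) γ (-(4 * z / (1 - z) ^ 2))
      = (1 - z) ^ (-a) * ∑' n, A n * ascFactorial a (2 * n) * (z / (1 - z) ^ 2) ^ n := by
        congr 1
        refine tsum_congr fun n => ?_
        rw [ascFactorial_two_mul, neg_pow]
        ring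
    _ = _ := one_sub_rpow_neg_mul_tsum A a 2 hz hA
    _ = hyper2F1 (a - γ + 1) a γ (-z) := tsum_congr fun N => by
        simp only [A, sum_antidiagonal_quadratic_coeff a hγ N]
        rw [neg_pow z]
        ring

theorem hasDerivAt_formalMultilinearSeries_sum {𝕜 F : Type*} [NontriviallyNormedField 𝕜]
    [NormedAddCommGroup F] [NormedSpace 𝕜 F] [CompleteSpace F]
    (p : FormalMultilinearSeries 𝕜 𝕜 F) {x : 𝕜} (hx : ‖x‖ₑ < p.radius) :
    HasDerivAt p.sum (∑' n : ℕ, x ^ n • (n + 1) • p.coeff (n + 1)) x := by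
  have hsum := p.derivSeries.hasSum (x := x)
    (by simpa using hx.trans_le p.radius_le_radius_derivSeries)
  refine (p.hasFDerivAt_sum hx).hasDerivAt.congr_deriv ?_
  refine (hsum.mapL (ContinuousLinearMap.apply 𝕜 F 1)).tsum_eq.symm.trans ?_
  simp

theorem inv_Gamma_eq_mul_inv_Gamma_add_one (s : ℝ) :
    (Real.Gamma s)⁻¹ = s * (Real.Gamma (s + 1))⁻¹ := by
  rcases eq_or_ne s 0 with rfl | hs
  · simp [Real.Gamma_zero]
  · rw [Real.Gamma_add_one hs, mul_inv, mul_inv_cancel_left₀ hs]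

/-- The power series of the Bessel–Clifford function of order `ν`. -/
noncomputable def besselCliffordSeries (ν : ℝ) : FormalMultilinearSeries ℝ ℝ ℝ :=
  .ofScalars ℝ fun m => (m.factorial * Real.Gamma (m + ν + 1))⁻¹

/-- The Bessel–Clifford function of order `ν`, the entire function for which
`J_ν(x) = (x / 2) ^ ν * besselClifford ν (-(x ^ 2 / 4))`. -/
noncomputable def besselClifford (ν : ℝ) : ℝ → ℝ :=
  (besselCliffordSeries ν).sum

theorem radius_besselCliffordSeries (ν : ℝ) : (besselCliffordSeries ν).radius = ⊤ := by
  have hpos : ∀ᶠ m : ℕ in Filter.atTop, 0 < (m : ℝ) + ν + 1 := by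
    filter_upwards [Filter.eventually_gt_atTop ⌈-ν - 1⌉₊] with m hm
    linarith [Nat.lt_of_ceil_lt hm]
  refine FormalMultilinearSeries.ofScalars_radius_eq_top_of_tendsto ℝ _ ?_ ?_
  · filter_upwards [hpos] with m hm
    have := Real.Gamma_pos_of_pos hm
    positivity
  · have hlim : Filter.Tendsto (fun m : ℕ => ((m : ℝ) + 1)⁻¹ * (m + (ν + 1))⁻¹) Filter.atTop
        (nhds (0 * 0)) :=
      (tendsto_natCast_atTop_atTop.atTop_add tendsto_const_nhds).inv_tendsto_atTop.mul
        (tendsto_natCast_atTop_atTop.atTop_add tendsto_const_nhds).inv_tendsto_atTop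
    rw [zero_mul] at hlim
    refine hlim.congr' ?_
    filter_upwards [hpos] with m hm
    have := Real.Gamma_pos_of_pos hm
    have hm1 : ((m.succ : ℕ) : ℝ) + ν + 1 = m + ν + 1 + 1 := by push_cast; ring
    rw [← add_assoc, hm1, Real.Gamma_add_one hm.ne', Nat.factorial_succ,
      Real.norm_of_nonneg (by positivity), Real.norm_of_nonneg (by positivity)]
    push_cast
    field_simp

theorem hasSum_besselClifford (ν z : ℝ) :
    HasSum (fun m : ℕ => z ^ m / (m.factorial * Real.Gamma (m + ν + 1))) (besselClifford ν z) := by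
  have h := (besselCliffordSeries ν).hasSum (x := z) (by simp [radius_besselCliffordSeries])
  refine h.congr_fun fun m => ?_
  rw [besselCliffordSeries, FormalMultilinearSeries.ofScalars_apply_eq, smul_eq_mul, div_eq_inv_mul]

theorem hasDerivAt_besselClifford (ν z : ℝ) :
    HasDerivAt (besselClifford ν) (besselClifford (ν + 1) z) z := by
  refine (hasDerivAt_formalMultilinearSeries_sum (besselCliffordSeries ν) (x := z)
    (by simp [radius_besselCliffordSeries])).congr_deriv ?_
  rw [← (hasSum_besselClifford (ν + 1) z).tsum_eq]
  refine tsum_congr fun m => ?_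
  simp only [besselCliffordSeries, FormalMultilinearSeries.coeff_ofScalars, Nat.factorial_succ,
    smul_eq_mul, nsmul_eq_mul]
  push_cast
  rw [show (m : ℝ) + (ν + 1) + 1 = m + 1 + ν + 1 by ring]
  field_simp

theorem continuous_besselClifford (ν : ℝ) : Continuous (besselClifford ν) :=
  continuous_iff_continuousAt.2 fun z => (hasDerivAt_besselClifford ν z).continuousAt

theorem besselClifford_eq_add (ν z : ℝ) :
    besselClifford ν z =
      (ν + 1) * besselClifford (ν + 1) z + z * besselClifford (ν + 2) z := by
  have hmul : HasSum (fun m : ℕ => m * z ^ m / (m.factorial * Real.Gamma (m + (ν + 1) + 1)))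
      (z * besselClifford (ν + 2) z) := by
    rw [← hasSum_nat_add_iff' 1]
    simp only [Finset.range_one, Finset.sum_singleton, Nat.cast_zero, zero_mul, zero_div, sub_zero]
    refine ((hasSum_besselClifford (ν + 2) z).mul_left z).congr_fun fun m => ?_
    rw [Nat.factorial_succ, show ((m + 1 : ℕ) : ℝ) + (ν + 1) + 1 = m + (ν + 2) + 1 by
      push_cast; ring]
    push_cast
    field_simp
    ring
  refine (hasSum_besselClifford ν z).unique
    ((((hasSum_besselClifford (ν + 1) z).mul_left (ν + 1)).add hmul).congr_fun fun m => ?_)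
  rw [div_eq_mul_inv, mul_inv, inv_Gamma_eq_mul_inv_Gamma_add_one,
    show (m : ℝ) + ν + 1 + 1 = m + (ν + 1) + 1 by ring]
  ring

/-- The energy `C_ν(-s)² + s C_{ν+1}(-s)²` has derivative `-(2ν + 1) C_{ν+1}(-s)²`. -/
theorem abs_besselClifford_neg_le {ν s : ℝ} (hν : -(1 / 2) ≤ ν) (hs : 0 ≤ s) :
    |besselClifford ν (-s)| ≤ |besselClifford ν 0| := by
  let E : ℝ → ℝ := fun s => besselClifford ν (-s) ^ 2 + s * besselClifford (ν + 1) (-s) ^ 2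
  have hE (s : ℝ) : HasDerivAt E (-(2 * ν + 1) * besselClifford (ν + 1) (-s) ^ 2) s := by
    have h₀ := (hasDerivAt_besselClifford ν (-s)).scomp s (hasDerivAt_neg s)
    have h₁ := (hasDerivAt_besselClifford (ν + 1) (-s)).scomp s (hasDerivAt_neg s)
    refine ((h₀.pow 2).add ((hasDerivAt_id s).mul (h₁.pow 2))).congr_deriv ?_
    rw [show ν + 1 + 1 = ν + 2 by ring]
    simp only [id, Pi.pow_apply, Function.comp_apply, smul_eq_mul]
    push_cast
    linear_combination (-2 * besselClifford (ν + 1) (-s)) * besselClifford_eq_add ν (-s)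
  have hanti : Antitone E := antitone_of_deriv_nonpos (fun s => (hE s).differentiableAt)
    fun s => by
      rw [(hE s).deriv]
      nlinarith [sq_nonneg (besselClifford (ν + 1) (-s))]
  refine sq_le_sq.1 ?_
  calc besselClifford ν (-s) ^ 2
      ≤ E s := le_add_of_nonneg_right (by positivity)
    _ ≤ E 0 := hanti hs
    _ = besselClifford ν 0 ^ 2 := by simp [E]

theorem besselJ_eq_rpow_mul_besselClifford (ν : ℝ) {x : ℝ} (hx : 0 < x) :
    besselJ ν x = (x / 2) ^ ν * besselClifford ν (-(x ^ 2 / 4)) := by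
  rw [besselJ, ← (hasSum_besselClifford ν _).tsum_eq, ← tsum_mul_left]
  refine tsum_congr fun m => ?_
  rw [Real.rpow_add (by positivity), Real.rpow_mul (by positivity), Real.rpow_natCast,
    Real.rpow_two, div_pow x 2 2, neg_pow (x ^ 2 / 4), show (2 : ℝ) ^ 2 = 4 by norm_num]
  ring

theorem integral_exp_mul_rpow_mul_pow {s c : ℝ} (hs : 0 < s) (hc : 0 < c) (m : ℕ) :
    ∫ x in Set.Ioi (0 : ℝ), Real.exp (-c * x) * (x ^ (s - 1) * x ^ m) =
      c ^ (-s) * c⁻¹ ^ m * Real.Gamma (s + m) := by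
  have hsm : 0 < s + m := by positivity
  have hintegrand : Set.EqOn (fun x : ℝ => Real.exp (-c * x) * (x ^ (s - 1) * x ^ m))
      (fun x : ℝ => x ^ (s + m - 1) * Real.exp (-(c * x))) (Set.Ioi 0) := fun x hx => by
    dsimp only
    rw [← Real.rpow_natCast, ← Real.rpow_add hx, neg_mul]
    ring_nf
  rw [setIntegral_congr_fun measurableSet_Ioi hintegrand,
    Real.integral_rpow_mul_exp_neg_mul_Ioi hsm hc, one_div, Real.rpow_add (by positivity),
    Real.rpow_natCast, Real.inv_rpow hc.le, Real.rpow_neg hc.le]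

theorem integrableOn_exp_mul_rpow_mul_pow {s c : ℝ} (hs : 0 < s) (hc : 0 < c) (m : ℕ) :
    IntegrableOn (fun x : ℝ => Real.exp (-c * x) * (x ^ (s - 1) * x ^ m)) (Set.Ioi 0) := by
  refine Integrable.of_integral_ne_zero ?_
  rw [integral_exp_mul_rpow_mul_pow hs hc]
  have := Real.Gamma_pos_of_pos (show 0 < s + m by positivity)
  positivity

theorem integrableOn_exp_mul_rpow_mul_besselClifford_of_neg_half_le {ν s c : ℝ}
    (hν : -(1 / 2) ≤ ν) (hs : 0 < s) (hc : 0 < c) :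
    IntegrableOn (fun x : ℝ => Real.exp (-c * x) *
      (x ^ (s - 1) * besselClifford ν (-(x ^ 2 / 4)))) (Set.Ioi 0) := by
  have hmeas : AEStronglyMeasurable (fun x : ℝ => besselClifford ν (-(x ^ 2 / 4)))
      (volume.restrict (Set.Ioi 0)) :=
    ((continuous_besselClifford ν).comp (by fun_prop)).aestronglyMeasurable
  have hweight : IntegrableOn (fun x : ℝ => Real.exp (-c * x) * x ^ (s - 1)) (Set.Ioi 0) := by
    simpa only [pow_zero, mul_one] using integrableOn_exp_mul_rpow_mul_pow hs hc 0
  simpa only [IntegrableOn, mul_assoc] using hweight.mul_bdd hmeas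
    (.of_forall fun x => abs_besselClifford_neg_le hν (by positivity))

theorem integrableOn_exp_mul_rpow_mul_besselClifford (ν : ℝ) {s c : ℝ} (hs : 0 < s)
    (hc : 0 < c) :
    IntegrableOn (fun x : ℝ => Real.exp (-c * x) *
      (x ^ (s - 1) * besselClifford ν (-(x ^ 2 / 4)))) (Set.Ioi 0) := by
  obtain ⟨n, hn⟩ := exists_nat_ge (-(1 / 2) - ν)
  induction n generalizing ν s with
  | zero =>
    exact integrableOn_exp_mul_rpow_mul_besselClifford_of_neg_half_le (by simpa using hn) hs hc
  | succ n ih =>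
    push_cast at hn
    have h₁ := ih (ν + 1) hs (by linarith)
    have h₂ := ih (ν + 2) (s := s + 2) (by positivity) (by linarith)
    refine IntegrableOn.congr_fun ((h₁.const_mul (ν + 1)).sub (h₂.const_mul (1 / 4)))
      (fun x hx => ?_) measurableSet_Ioi
    have hpow : x ^ (s + 2 - 1) = x ^ (s - 1) * x ^ 2 := by
      rw [← Real.rpow_two, ← Real.rpow_add hx]
      ring_nf
    simp only [Pi.sub_apply, hpow, besselClifford_eq_add ν]
    ring

theorem Gamma_add_two_mul_div_Gamma_add {s ν : ℝ} (hs : ∀ k : ℕ, s ≠ -k)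
    (hν : ∀ k : ℕ, 1 + ν ≠ -k) (m : ℕ) :
    Real.Gamma (s + (2 * m : ℕ)) / Real.Gamma (m + ν + 1) =
      Real.Gamma s / Real.Gamma (ν + 1) *
        (4 ^ m * (ascFactorial (s / 2) m * ascFactorial ((s + 1) / 2) m) /
          ascFactorial (1 + ν) m) := by
  rw [Gamma_add_natCast hs, ascFactorial_two_mul, show (m : ℝ) + ν + 1 = 1 + ν + m by ring,
    Gamma_add_natCast hν, add_comm ν 1]
  ring

theorem besselClifford_neg_sq_div_four (ν x : ℝ) :
    besselClifford ν (-(x ^ 2 / 4)) =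
      ∑' m : ℕ, (-(1 / 4)) ^ m / (m.factorial * Real.Gamma (m + ν + 1)) * x ^ (2 * m) := by
  rw [← (hasSum_besselClifford ν _).tsum_eq]
  refine tsum_congr fun m => ?_
  rw [show -(x ^ 2 / 4) = -(1 / 4) * x ^ 2 by ring, mul_pow, ← pow_mul]
  ring

theorem integral_norm_const_mul_of_nonneg {X : Type*} {mX : MeasurableSpace X} {μ : Measure X}
    {g : X → ℝ} (hg : 0 ≤ᵐ[μ] g) (a : ℝ) : ∫ x, ‖a * g x‖ ∂μ = ‖∫ x, a * g x ∂μ‖ := by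
  simp only [norm_mul, integral_const_mul, Real.norm_of_nonneg (integral_nonneg_of_ae hg)]
  congr 1
  exact integral_congr_ae (hg.mono fun x hx => Real.norm_of_nonneg hx)

theorem integral_exp_mul_rpow_mul_besselClifford_of_one_lt {ν s c : ℝ}
    (hν : ∀ k : ℕ, 1 + ν ≠ -k) (hs : 0 < s) (hc : 1 < c) :
    ∫ x in Set.Ioi (0 : ℝ), Real.exp (-c * x) *
        (x ^ (s - 1) * besselClifford ν (-(x ^ 2 / 4))) =
      Real.Gamma s / Real.Gamma (ν + 1) * c ^ (-s) *
        hyper2F1 (s / 2) ((s + 1) / 2) (1 + ν) (-(1 / c ^ 2)) := by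
  have hc₀ : 0 < c := one_pos.trans hc
  let a : ℕ → ℝ := fun m => (-(1 / 4)) ^ m / (m.factorial * Real.Gamma (m + ν + 1))
  let F : ℕ → ℝ → ℝ := fun m x => a m * (Real.exp (-c * x) * (x ^ (s - 1) * x ^ (2 * m)))
  let t : ℕ → ℝ := fun m => ascFactorial (s / 2) m * ascFactorial ((s + 1) / 2) m /
    (ascFactorial (1 + ν) m * m.factorial) * (-(1 / c ^ 2)) ^ m
  have hF (m : ℕ) : IntegrableOn (F m) (Set.Ioi 0) :=
    (integrableOn_exp_mul_rpow_mul_pow hs hc₀ (2 * m)).const_mul _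
  have hval (m : ℕ) : ∫ x in Set.Ioi (0 : ℝ), F m x =
      Real.Gamma s / Real.Gamma (ν + 1) * c ^ (-s) * t m := by
    have hs' (k : ℕ) : s ≠ -k := ((neg_nonpos.2 k.cast_nonneg).trans_lt hs).ne'
    have hΓ := Gamma_add_two_mul_div_Gamma_add hs' hν m
    calc ∫ x in Set.Ioi (0 : ℝ), F m x
        = (-(1 / 4)) ^ m / m.factorial * (c ^ (-s) * c⁻¹ ^ (2 * m)) *
            (Real.Gamma (s + (2 * m : ℕ)) / Real.Gamma (m + ν + 1)) := by
          rw [integral_const_mul, integral_exp_mul_rpow_mul_pow hs hc₀]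
          ring
      _ = Real.Gamma s / Real.Gamma (ν + 1) * c ^ (-s) * t m := by
          rw [hΓ, pow_mul, neg_pow (1 / 4 : ℝ)]
          dsimp only [t]
          rw [neg_pow (1 / c ^ 2), one_div_pow, one_div, inv_pow]
          field_simp
  have hnorm (m : ℕ) : ∫ x in Set.Ioi (0 : ℝ), ‖F m x‖ = ‖∫ x in Set.Ioi (0 : ℝ), F m x‖ :=
    integral_norm_const_mul_of_nonneg (ae_restrict_of_forall_mem measurableSet_Ioi
      fun x (hx : 0 < x) => by positivity) (a m)
  have hexpand (x : ℝ) : ∑' m, F m x =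
      Real.exp (-c * x) * (x ^ (s - 1) * besselClifford ν (-(x ^ 2 / 4))) := by
    rw [besselClifford_neg_sq_div_four, ← tsum_mul_left, ← tsum_mul_left]
    exact tsum_congr fun m => by ring
  have ht : Summable fun m => ‖t m‖ := summable_norm_hyper2F1 _ _ _ <| by
    rw [abs_neg, abs_of_nonneg (by positivity), div_lt_one (by positivity)]
    exact one_lt_pow₀ hc two_ne_zero
  have hsum := hasSum_integral_of_summable_integral_norm hF <| by
    simpa only [hnorm, hval, norm_mul] using ht.mul_left _
  simp only [hexpand, hval] at hsum
  rw [← hsum.tsum_eq, tsum_mul_left, hyper2F1]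

section WeightedMgf

variable {Ω : Type*} {mΩ : MeasurableSpace Ω} {P : Measure Ω} {X f : Ω → ℝ}

theorem analyticOnNhd_integral_exp_mul_of_nonneg (hf : AEMeasurable f P) (hf₀ : 0 ≤ f) :
    AnalyticOnNhd ℝ (fun t => ∫ ω, Real.exp (t * X ω) * f ω ∂P)
      (interior {t | Integrable (fun ω => Real.exp (t * X ω) * f ω) P}) := by
  have hlt : ∀ᵐ ω ∂P, ENNReal.ofReal (f ω) < ⊤ := .of_forall fun _ => ENNReal.ofReal_lt_top
  have hsmul (t : ℝ) (ω : Ω) :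
      (ENNReal.ofReal (f ω)).toReal • Real.exp (t * X ω) = Real.exp (t * X ω) * f ω := by
    rw [ENNReal.toReal_ofReal (hf₀ ω), smul_eq_mul, mul_comm]
  have hmgf : AnalyticOnNhd ℝ
      (fun t => ∫ ω, Real.exp (t * X ω) ∂P.withDensity fun ω => ENNReal.ofReal (f ω))
      (interior {t | Integrable (fun ω => Real.exp (t * X ω))
        (P.withDensity fun ω => ENNReal.ofReal (f ω))}) :=
    ProbabilityTheory.analyticOnNhd_mgf
  simpa only [integral_withDensity_eq_integral_toReal_smul₀ hf.ennreal_ofReal hlt,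
    integrable_withDensity_iff_integrable_smul₀' hf.ennreal_ofReal hlt, hsmul] using hmgf

theorem analyticOnNhd_integral_exp_mul (hf : AEMeasurable f P) :
    AnalyticOnNhd ℝ (fun t => ∫ ω, Real.exp (t * X ω) * f ω ∂P)
      (interior {t | Integrable (fun ω => Real.exp (t * X ω) * f ω) P}) := by
  have habs {t : ℝ} (ht : Integrable (fun ω => Real.exp (t * X ω) * f ω) P) :
      Integrable (fun ω => Real.exp (t * X ω) * |f ω|) P := by
    simpa only [abs_mul, Real.abs_exp] using ht.abs
  have hdiff {t : ℝ} (ht : Integrable (fun ω => Real.exp (t * X ω) * f ω) P) :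
      Integrable (fun ω => Real.exp (t * X ω) * (|f ω| - f ω)) P :=
    ((habs ht).sub ht).congr (.of_forall fun ω => (mul_sub _ _ _).symm)
  have h₁ := (analyticOnNhd_integral_exp_mul_of_nonneg (X := X) hf.abs
    fun ω => abs_nonneg (f ω)).mono (interior_mono fun t => habs)
  have h₂ := (analyticOnNhd_integral_exp_mul_of_nonneg (X := X) (hf.abs.sub hf)
    fun ω => sub_nonneg.2 (le_abs_self (f ω))).mono (interior_mono fun t => hdiff)
  refine (h₁.sub h₂).congr isOpen_interior fun t ht => ?_
  have ht := interior_subset ht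
  simp only [Pi.sub_apply]
  rw [← integral_sub (habs ht) (hdiff ht)]
  refine integral_congr_ae (.of_forall fun ω => ?_)
  simp only
  ring

end WeightedMgf

theorem analyticOnNhd_integral_exp_mul_rpow_mul_besselClifford (ν : ℝ) {s : ℝ} (hs : 0 < s) :
    AnalyticOnNhd ℝ (fun c : ℝ => ∫ x in Set.Ioi (0 : ℝ), Real.exp (-c * x) *
      (x ^ (s - 1) * besselClifford ν (-(x ^ 2 / 4)))) (Set.Ioi 0) := by
  have hmeas : Measurable fun x : ℝ => x ^ (s - 1) * besselClifford ν (-(x ^ 2 / 4)) :=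
    (measurable_id.pow_const _).mul
      ((continuous_besselClifford ν).comp (by fun_prop)).measurable
  have h := analyticOnNhd_integral_exp_mul (P := volume.restrict (Set.Ioi 0)) (X := Neg.neg)
    hmeas.aemeasurable
  simp only [mul_neg, ← neg_mul] at h
  exact h.mono (interior_maximal
    (fun c hc => integrableOn_exp_mul_rpow_mul_besselClifford ν hs hc) isOpen_Ioi)

theorem abs_lt_sqrt_sq_add_one (c : ℝ) : |c| < Real.sqrt (c ^ 2 + 1) := by
  rw [← Real.sqrt_sq_eq_abs]
  exact Real.sqrt_lt_sqrt (sq_nonneg c) (lt_add_one _)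

theorem hypergeometric_argument_mem_Ioo {c : ℝ} (hc : 0 < c) :
    (Real.sqrt (c ^ 2 + 1) - c) / (2 * Real.sqrt (c ^ 2 + 1)) ∈ Set.Ioo (0 : ℝ) (1 / 2) := by
  have h := (abs_lt.1 (abs_lt_sqrt_sq_add_one c)).2
  refine ⟨div_pos (sub_pos.2 h) (by positivity), ?_⟩
  rw [div_lt_div_iff₀ (by positivity) two_pos]
  linarith

theorem rpow_neg_add_eq {c r t : ℝ} (hc : 0 < c) (hr : 0 < r) (ht : 0 < t) (p ν : ℝ) :
    c ^ (-(p + ν)) = 2 ^ ν * (r ^ (-p) * t ^ (-ν)) *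
      ((t / (2 * r)) ^ (-p) * (2 * c / t) ^ (-(p + ν))) := by
  rw [Real.div_rpow ht.le (by positivity), Real.div_rpow (by positivity) ht.le,
    Real.mul_rpow zero_le_two hr.le, Real.mul_rpow zero_le_two hc.le]
  simp only [Real.rpow_neg, zero_le_two, hr.le, hc.le, ht.le, Real.rpow_add ht,
    Real.rpow_add (zero_lt_two' ℝ)]
  field_simp

theorem rpow_neg_mul_hyper2F1_neg_one_div_sq {μ ν c r : ℝ} (hν : ∀ k : ℕ, 1 + ν ≠ -k)
    (hc : 1 < c) (hr : 0 < r) (hrc : r ^ 2 = c ^ 2 + 1) :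
    c ^ (-(μ + ν + 1)) * hyper2F1 ((μ + ν + 1) / 2) ((μ + ν + 1 + 1) / 2) (1 + ν) (-(1 / c ^ 2)) =
      2 ^ ν * (r ^ (-(μ + 1)) * (r + c) ^ (-ν)) *
        hyper2F1 (-μ) (μ + 1) (1 + ν) ((r - c) / (2 * r)) := by
  have hcr : c < r := by nlinarith
  have hsub : r - c < 1 := by nlinarith
  have hprod : (r - c) * (r + c) = 1 := by linear_combination hrc
  let w := (r - c) / (r + c)
  have hw₀ : 0 < w := div_pos (by linarith) (by linarith)
  have hw₁ : w < 1 := (div_lt_one (by linarith)).2 (by linarith)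
  have hone_sub_w : 1 - w = 2 * c / (r + c) := by
    simp only [w]
    field_simp
    ring
  have hw : 4 * w / (1 - w) ^ 2 = 1 / c ^ 2 := by
    rw [hone_sub_w]
    simp only [w]
    field_simp
    linear_combination 4 * hprod
  have hquad := one_sub_rpow_neg_mul_hyper2F1_quadratic (μ + ν + 1) hν (z := w)
    (by rwa [abs_of_pos hw₀]) (by
      rw [abs_of_pos hw₀, ← div_lt_one (by nlinarith), hw, div_lt_one (by positivity)]
      nlinarith)
  have hpfaff := one_sub_rpow_neg_mul_hyper2F1_pfaff (-μ) (μ + 1) hν (z := (r - c) / (2 * r)) (by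
    rw [abs_of_pos (div_pos (by linarith) (by linarith)), div_lt_div_iff₀ (by positivity) two_pos]
    linarith)
  have hone_sub_z : 1 - (r - c) / (2 * r) = (r + c) / (2 * r) := by
    field_simp
    ring
  rw [hw, show μ + ν + 1 - (1 + ν) + 1 = μ + 1 by ring, hone_sub_w] at hquad
  rw [hone_sub_z, div_div_div_cancel_right₀ (by positivity), show 1 + ν - -μ = μ + ν + 1 by ring]
    at hpfaff
  have hpow := rpow_neg_add_eq (one_pos.trans hc) hr (show 0 < r + c by positivity) (μ + 1) ν
  rw [show μ + 1 + ν = μ + ν + 1 by ring] at hpow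
  rw [← hpfaff, ← hquad, hpow]
  ring

theorem analyticOnNhd_rpow_mul_hyper2F1_sqrt (μ ν : ℝ) :
    AnalyticOnNhd ℝ (fun c => Real.sqrt (c ^ 2 + 1) ^ (-(μ + 1)) *
      (Real.sqrt (c ^ 2 + 1) + c) ^ (-ν) * hyper2F1 (-μ) (μ + 1) (1 + ν)
        ((Real.sqrt (c ^ 2 + 1) - c) / (2 * Real.sqrt (c ^ 2 + 1)))) (Set.Ioi 0) := by
  intro c hc
  have hc₀ : 0 < c := hc
  have hr₀ : Real.sqrt (c ^ 2 + 1) ≠ 0 := by positivity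
  have hrc₀ : Real.sqrt (c ^ 2 + 1) + c ≠ 0 := by positivity
  have hr : AnalyticAt ℝ (fun c : ℝ => Real.sqrt (c ^ 2 + 1)) c :=
    ((contDiffAt_id.pow 2).add contDiffAt_const).sqrt (by positivity) |>.analyticAt
  have hrpow : AnalyticAt ℝ (fun c : ℝ => Real.sqrt (c ^ 2 + 1) ^ (-(μ + 1))) c :=
    (hr.contDiffAt.rpow_const_of_ne hr₀).analyticAt
  have hrcpow : AnalyticAt ℝ (fun c : ℝ => (Real.sqrt (c ^ 2 + 1) + c) ^ (-ν)) c :=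
    ((hr.add analyticAt_id).contDiffAt.rpow_const_of_ne hrc₀).analyticAt
  have hz : AnalyticAt ℝ
      (fun c : ℝ => (Real.sqrt (c ^ 2 + 1) - c) / (2 * Real.sqrt (c ^ 2 + 1))) c :=
    (hr.sub analyticAt_id).div (analyticAt_const.mul hr) (by positivity)
  obtain ⟨hz₀, hz₁⟩ := hypergeometric_argument_mem_Ioo hc₀
  have hF := analyticOnNhd_hyper2F1 (-μ) (μ + 1) (1 + ν) _
    (by rw [mem_ball_zero_iff, Real.norm_of_nonneg hz₀.le]; linarith)
  exact (hrpow.mul hrcpow).mul (hF.comp_of_eq hz rfl)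

theorem integral_exp_mul_rpow_mul_besselClifford {μ ν c : ℝ} (hν : ∀ k : ℕ, 1 + ν ≠ -k)
    (hμν : -1 < μ + ν) (hc : 0 < c) :
    ∫ x in Set.Ioi (0 : ℝ), Real.exp (-c * x) *
        (x ^ (μ + ν) * besselClifford ν (-(x ^ 2 / 4))) =
      Real.Gamma (μ + ν + 1) / Real.Gamma (ν + 1) * 2 ^ ν *
        (Real.sqrt (c ^ 2 + 1) ^ (-(μ + 1)) * (Real.sqrt (c ^ 2 + 1) + c) ^ (-ν) *
          hyper2F1 (-μ) (μ + 1) (1 + ν)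
            ((Real.sqrt (c ^ 2 + 1) - c) / (2 * Real.sqrt (c ^ 2 + 1)))) := by
  have hs : 0 < μ + ν + 1 := by linarith
  have hlaplace := analyticOnNhd_integral_exp_mul_rpow_mul_besselClifford ν hs
  simp only [add_sub_cancel_right] at hlaplace
  refine hlaplace.eqOn_of_preconnected_of_eventuallyEq
    (analyticOnNhd_const.mul (analyticOnNhd_rpow_mul_hyper2F1_sqrt μ ν)) isPreconnected_Ioi
    (Set.mem_Ioi.2 (two_pos (α := ℝ))) ?_ hc
  filter_upwards [Ioi_mem_nhds one_lt_two] with c hc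
  have hlarge := integral_exp_mul_rpow_mul_besselClifford_of_one_lt hν hs hc
  rw [add_sub_cancel_right] at hlarge
  rw [hlarge, mul_assoc, rpow_neg_mul_hyper2F1_neg_one_div_sq hν hc (by positivity)
    (Real.sq_sqrt (by positivity))]
  ring

theorem rpow_neg_mul_sqrt_add_rpow_neg (p ν : ℝ) {c : ℝ} (hc : 0 < c) :
    Real.sqrt (c ^ 2 + 1) ^ (-p) * (Real.sqrt (c ^ 2 + 1) + c) ^ (-ν) =
      ((c ^ 2 + 1) ^ (p / 2))⁻¹ *
        ((Real.sqrt (c ^ 2 + 1) + c) / (Real.sqrt (c ^ 2 + 1) - c)) ^ (-ν / 2) := by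
  have hlt := (abs_lt.1 (abs_lt_sqrt_sq_add_one c)).2
  have hsq : Real.sqrt (c ^ 2 + 1) ^ 2 = c ^ 2 + 1 := Real.sq_sqrt (by positivity)
  have hr : 0 < Real.sqrt (c ^ 2 + 1) := hc.trans hlt
  have hquot : (Real.sqrt (c ^ 2 + 1) + c) / (Real.sqrt (c ^ 2 + 1) - c) =
      (Real.sqrt (c ^ 2 + 1) + c) ^ (2 : ℝ) := by
    rw [div_eq_iff (sub_pos.2 hlt).ne', Real.rpow_two]
    linear_combination -(Real.sqrt (c ^ 2 + 1) + c) * hsq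
  rw [hquot, ← Real.rpow_mul (by positivity), mul_div_cancel₀ _ two_ne_zero, Real.rpow_neg hr.le,
    Real.sqrt_eq_rpow, ← Real.rpow_mul (by positivity)]
  ring_nf

theorem coreMoment_closed_form_general {μ ν c : ℝ} (hν : ∀ k : ℕ, 1 + ν ≠ -k)
    (hμν : -1 < μ + ν) (hc : 0 < c) :
    (Real.sqrt (c ^ 2 + 1) - c) / (2 * Real.sqrt (c ^ 2 + 1)) ∈ Set.Ioo (0 : ℝ) (1 / 2) ∧
    ∫ x in Set.Ioi (0 : ℝ), x ^ μ * Real.exp (-c * x) * besselJ ν x =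
      Real.Gamma (μ + ν + 1) / ((c ^ 2 + 1) ^ ((μ + 1) / 2) * Real.Gamma (ν + 1)) *
        ((Real.sqrt (c ^ 2 + 1) + c) / (Real.sqrt (c ^ 2 + 1) - c)) ^ (-ν / 2) *
        hyper2F1 (-μ) (μ + 1) (1 + ν)
          ((Real.sqrt (c ^ 2 + 1) - c) / (2 * Real.sqrt (c ^ 2 + 1))) := by
  refine ⟨hypergeometric_argument_mem_Ioo hc, ?_⟩
  have hintegrand : Set.EqOn (fun x => x ^ μ * Real.exp (-c * x) * besselJ ν x)
      (fun x => (2 ^ ν)⁻¹ * (Real.exp (-c * x) *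
        (x ^ (μ + ν) * besselClifford ν (-(x ^ 2 / 4))))) (Set.Ioi 0) := fun x hx => by
    dsimp only
    rw [besselJ_eq_rpow_mul_besselClifford ν hx, Real.div_rpow (le_of_lt hx) zero_le_two,
      Real.rpow_add hx]
    ring
  rw [setIntegral_congr_fun measurableSet_Ioi hintegrand, integral_const_mul,
    integral_exp_mul_rpow_mul_besselClifford hν hμν hc, rpow_neg_mul_sqrt_add_rpow_neg _ _ hc]
  have h2 : (2 : ℝ) ^ ν ≠ 0 := by positivity
  field_simp

theorem coreMoment_closed_form (ν α c : ℝ) (hν : 0 ≤ ν) (hα : -1 < α) (hc : 0 < c) (k : ℕ) :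
    (Real.sqrt (c ^ 2 + 1) - c) / (2 * Real.sqrt (c ^ 2 + 1)) ∈ Set.Ioo (0 : ℝ) (1 / 2) ∧
    ∫ x in Set.Ioi (0 : ℝ), x ^ ((k : ℝ) + α) * Real.exp (-c * x) * besselJ ν x =
      Real.Gamma ((k : ℝ) + α + ν + 1) /
          ((c ^ 2 + 1) ^ (((k : ℝ) + α + 1) / 2) * Real.Gamma (ν + 1)) *
        ((Real.sqrt (c ^ 2 + 1) + c) / (Real.sqrt (c ^ 2 + 1) - c)) ^ (-ν / 2) *
        hyper2F1 (-(k : ℝ) - α) ((k : ℝ) + α + 1) (1 + ν)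
          ((Real.sqrt (c ^ 2 + 1) - c) / (2 * Real.sqrt (c ^ 2 + 1))) := by
  rw [← neg_add']
  exact coreMoment_closed_form_general
    (fun n => ((neg_nonpos.2 n.cast_nonneg).trans_lt (by positivity)).ne')
    (by linarith [k.cast_nonneg (α := ℝ)]) hc
end

section
/- Let α > -1 and let i, j be integers with 1 ≤ i ≤ j. Then Σ_{l=1}^{i} [ Γ(j) Γ(α+j) Γ(i) Γ(α+i) ] / [ (j−l)! (i−l)! Γ(l) Γ(α+l) ] = Γ(i+j+α−1). -/
/-!
With `i = m + 1`, `j = n + 1`, `l = k + 1` and `x = α + 1`, dividing by `Γ(x + n)` turns the ratios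
of Gamma values into rising factorials, `Γ(z + d) / Γ(z) = z(z + 1)⋯(z + d - 1)`, and the identity
into the Chu–Vandermonde convolution for the rising factorial of `x + n`.
-/

section RisingFactorial

open Finset Polynomial

theorem descPochhammer_smeval_eq_ascPochhammer_eval {R : Type*} [Ring R] (r : R) (k : ℕ) :
    (descPochhammer ℤ k).smeval r = (ascPochhammer R k).eval (r - k + 1) := by
  rw [descPochhammer_smeval_eq_ascPochhammer, ascPochhammer_smeval_eq_eval]

theorem ascPochhammer_eval_add {R : Type*} [Ring R] {x y : R} (h : Commute x y) (m : ℕ) :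
    (ascPochhammer R m).eval (x + y) =
      ∑ p ∈ antidiagonal m, (m.choose p.1 : R) *
        ((descPochhammer R p.1).eval y * (ascPochhammer R p.2).eval (x + p.1)) := by
  -- The rising factorial of `x + y` is the falling factorial of its largest factor,
  -- `y + (x + m - 1)`.
  have vandermonde := Ring.descPochhammer_smeval_add m
    ((h.symm.add_right (Nat.commute_cast y m)).sub_right (Commute.one_right y))
  simp only [descPochhammer_smeval_eq_ascPochhammer_eval] at vandermonde
  rw [show x + y = y + (x + m - 1) - m + 1 by abel, vandermonde]
  refine sum_congr rfl fun p hp => ?_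
  rw [descPochhammer_eval_eq_ascPochhammer, ← mem_antidiagonal.mp hp, Nat.cast_add,
    show x + (p.1 + p.2) - 1 - p.2 + 1 = x + (p.1 : R) by abel]

end RisingFactorial

section Gamma

open Finset

theorem add_natCast_ne_neg_natCast {R : Type*} [AddGroupWithOne R] {z : R}
    (hz : ∀ k : ℕ, z ≠ -k) (n k : ℕ) : z + n ≠ -k :=
  fun h => hz (n + k) <| by
    rw [Nat.cast_add, neg_add_rev, ← sub_eq_add_neg]
    exact eq_sub_of_add_eq h

theorem Gamma_add_natCast_div_Gamma_eq_sum {x y : ℂ} (hx : ∀ k : ℕ, x ≠ -k)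
    (hxy : ∀ k : ℕ, x + y ≠ -k) (m : ℕ) :
    Complex.Gamma (x + y + m) / Complex.Gamma (x + y) =
      ∑ k ∈ range (m + 1), (m.choose k : ℂ) *
        ((descPochhammer ℂ k).eval y * (Complex.Gamma (x + m) / Complex.Gamma (x + k))) := by
  rw [Complex.Gamma_add_nat_div_Gamma_eq _ hxy, ascPochhammer_eval_add (Commute.all x y),
    Nat.sum_antidiagonal_eq_sum_range_succ_mk]
  refine sum_congr rfl fun k hk => ?_
  rw [← Complex.Gamma_add_nat_div_Gamma_eq _ (add_natCast_ne_neg_natCast hx k), add_assoc,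
    ← Nat.cast_add, Nat.add_sub_cancel' (mem_range_succ_iff.mp hk)]

theorem sum_factorial_mul_Gamma_div_eq_Gamma {x : ℂ} (hx : ∀ k : ℕ, x ≠ -k) {m n : ℕ}
    (hmn : m ≤ n) :
    ∑ k ∈ range (m + 1),
        n.factorial * Complex.Gamma (x + n) * m.factorial * Complex.Gamma (x + m) /
          ((n - k).factorial * (m - k).factorial * k.factorial * Complex.Gamma (x + k)) =
      Complex.Gamma (x + n + m) := by
  have hxn := add_natCast_ne_neg_natCast hx n
  rw [← div_mul_cancel₀ (Complex.Gamma (x + n + m)) (Complex.Gamma_ne_zero hxn),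
    Gamma_add_natCast_div_Gamma_eq_sum hx hxn, sum_mul]
  refine sum_congr rfl fun k hk => ?_
  have hkm : k ≤ m := mem_range_succ_iff.mp hk
  have hdesc : ((n - k).factorial : ℂ) * n.descFactorial k = n.factorial :=
    mod_cast Nat.factorial_mul_descFactorial (hkm.trans hmn)
  have hfact : ((n - k).factorial : ℂ) ≠ 0 := mod_cast (n - k).factorial_ne_zero
  rw [descPochhammer_eval_eq_descFactorial, Nat.cast_choose ℂ hkm, ← hdesc]
  field_simp

end Gamma

theorem gamma_convolution_identity_general (α : ℂ) (hα : ∀ k : ℕ, α + 1 ≠ -k) (i j : ℕ)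
    (hi : 1 ≤ i) (hij : i ≤ j) :
    ∑ l ∈ Finset.Icc 1 i,
        Complex.Gamma j * Complex.Gamma (α + j) * Complex.Gamma i * Complex.Gamma (α + i) /
          ((j - l).factorial * (i - l).factorial * Complex.Gamma l * Complex.Gamma (α + l)) =
      Complex.Gamma (i + j + α - 1) := by
  obtain ⟨m, rfl⟩ := Nat.exists_eq_add_of_le' hi
  obtain ⟨n, rfl⟩ := Nat.exists_eq_add_of_le' (hi.trans hij)
  have hmn : m ≤ n := Nat.le_of_add_le_add_right hij
  rw [show ((m + 1 : ℕ) : ℂ) + (n + 1 : ℕ) + α - 1 = α + 1 + n + m by push_cast; ring,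
    ← sum_factorial_mul_Gamma_div_eq_Gamma hα hmn, Finset.range_eq_Ico,
    ← Finset.Ico_add_one_right_eq_Icc, ← Finset.sum_Ico_add' _ 0 (m + 1) 1]
  simp only [Nat.add_sub_add_right, Nat.cast_succ, Complex.Gamma_nat_eq_factorial, ← add_assoc,
    add_right_comm α _ 1]

theorem gamma_convolution_identity (α : ℝ) (hα : -1 < α) (i j : ℕ)
    (hi : 1 ≤ i) (hij : i ≤ j) :
    ∑ l ∈ Finset.Icc 1 i,
        Real.Gamma (j : ℝ) * Real.Gamma (α + (j : ℝ)) * Real.Gamma (i : ℝ) *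
            Real.Gamma (α + (i : ℝ)) /
          (((j - l).factorial : ℝ) * ((i - l).factorial : ℝ) * Real.Gamma (l : ℝ) *
            Real.Gamma (α + (l : ℝ))) =
      Real.Gamma ((i : ℝ) + (j : ℝ) + α - 1) := by
  have hpole (k : ℕ) : (α : ℂ) + 1 ≠ -k := by
    have : α + 1 ≠ -k := by linarith [k.cast_nonneg (α := ℝ)]
    exact_mod_cast this
  apply Complex.ofReal_injective
  push_cast [← Complex.Gamma_ofReal]
  exact gamma_convolution_identity_general α hpole i j hi hij
end
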